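/- arXiv:2001.00284 — 4 statements merged into one kernel-verified Lean document; each statement's English description precedes it below -/
import Mathlib

section
/- Let D be an abelian category with arbitrary small coproducts carrying a closed symmetric monoidal structure whose tensor product is additive in each variable, and assume that D has no nontrivial localizing tensor-ideal. If X is a flat object of D and Y is any object such that X ⊗ Y is a zero object, then X is a zero object or Y is a zero object. -/
open CategoryTheory CategoryTheory.Limits CategoryTheory.MonoidalCategory

universe v u

/-- A localizing tensor-ideal of an abelian monoidal category with coproducts:
a class of objects closed under isomorphisms, subobjects, quotient objects,
extensions, arbitrary (small) coproducts, and tensoring with arbitrary objects. -/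
def IsLocalizingTensorIdeal {D : Type u} [Category.{v} D] [Abelian D]
    [MonoidalCategory D] [HasCoproducts.{v} D] (S : Set D) : Prop :=
  (∀ (M N : D), (M ≅ N) → M ∈ S → N ∈ S) ∧
  (∀ (M N : D) (f : N ⟶ M), Mono f → M ∈ S → N ∈ S) ∧
  (∀ (M N : D) (f : M ⟶ N), Epi f → M ∈ S → N ∈ S) ∧
  (∀ (T : ShortComplex D), T.ShortExact → T.X₁ ∈ S → T.X₃ ∈ S → T.X₂ ∈ S) ∧
  (∀ (ι : Type v) (f : ι → D), (∀ i, f i ∈ S) → (∐ f) ∈ S) ∧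
  (∀ (N M : D), M ∈ S → (N ⊗ M) ∈ S)

/-- If an abelian closed symmetric monoidal category with coproducts has no nontrivial
localizing tensor-ideal, then a flat object `X` with `X ⊗ Y = 0` forces `X = 0` or `Y = 0`. -/
theorem isZero_or_isZero_of_isZero_tensor_of_flat
    {D : Type u} [Category.{v} D] [Abelian D] [MonoidalCategory D]
    [SymmetricCategory D] [MonoidalClosed D] [MonoidalPreadditive D]
    [HasCoproducts.{v} D]
    (hD : ∀ S : Set D, IsLocalizingTensorIdeal S →
      S = {M : D | IsZero M} ∨ S = Set.univ)
    (X : D) (hX₁ : PreservesFiniteLimits (tensorLeft X))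
    (hX₂ : PreservesFiniteColimits (tensorLeft X))
    (Y : D) (hXY : IsZero (X ⊗ Y)) :
    IsZero X ∨ IsZero Y := by
  have key : IsLocalizingTensorIdeal {M : D | IsZero (X ⊗ M)} := by
    refine ⟨?_, ?_, ?_, ?_, ?_, ?_⟩
    · intro M N e h
      exact IsZero.of_iso h ((tensorLeft X).mapIso e).symm
    · intro M N f hf h
      have : Mono ((tensorLeft X).map f) := inferInstance
      exact IsZero.of_mono ((tensorLeft X).map f) h
    · intro M N f hf h
      have : Epi ((tensorLeft X).map f) := inferInstance
      exact IsZero.of_epi ((tensorLeft X).map f) h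
    · intro T hT h1 h3
      have h := (hT.map_of_exact (tensorLeft X)).exact
      exact h.isZero_of_both_zeros (h1.eq_of_src _ _) (h3.eq_of_tgt _ _)
    · intro ι f hf
      have e := PreservesCoproduct.iso (tensorLeft X) f
      refine IsZero.of_iso ?_ e
      rw [IsZero.iff_id_eq_zero]
      apply Sigma.hom_ext
      intro i
      exact (show IsZero (X ⊗ f i) from hf i).eq_of_src _ _
    · intro N M h
      have h' : IsZero (X ⊗ M) := h
      have h2 : IsZero (N ⊗ (X ⊗ M)) := (tensorLeft N).map_isZero h'
      exact IsZero.of_iso h2 ((α_ X N M).symm ≪≫ whiskerRightIso (β_ X N) M ≪≫ α_ N X M)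
  rcases hD _ key with h | h
  · right
    have : Y ∈ {M : D | IsZero (X ⊗ M)} := hXY
    rw [h] at this
    exact this
  · left
    have : 𝟙_ D ∈ {M : D | IsZero (X ⊗ M)} := by rw [h]; trivial
    exact IsZero.of_iso this (ρ_ X).symm
end

section
/- Let D be an abelian category with arbitrary small coproducts carrying a closed symmetric monoidal structure whose tensor product is additive in each variable, and assume that D has no nontrivial localizing tensor-ideal. Let A be a flat object of D and η : 𝟙 ⟶ A a morphism such that A ◁ η : A ⟶ A ⊗ A (the identity of A tensored with η) is a split monomorphism (i.e., (A, η) is a weak ring). Then either A is a zero object or η is a monomorphism. -/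
open CategoryTheory CategoryTheory.Limits CategoryTheory.MonoidalCategory

universe v u

/-- In an abelian closed symmetric monoidal category with coproducts and with no nontrivial
localizing tensor-ideal, a flat weak ring `(A, η)` is either zero or has monic unit. -/
theorem weakRing_isZero_or_mono_unit
    {D : Type u} [Category.{v} D] [Abelian D] [MonoidalCategory D]
    [SymmetricCategory D] [MonoidalClosed D] [MonoidalPreadditive D]
    [HasCoproducts.{v} D]
    (hD : ∀ S : Set D, IsLocalizingTensorIdeal S →
      S = {M : D | IsZero M} ∨ S = Set.univ)
    (A : D) (hA₁ : PreservesFiniteLimits (tensorLeft A))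
    (hA₂ : PreservesFiniteColimits (tensorLeft A))
    (η : 𝟙_ D ⟶ A) (hη : IsSplitMono (A ◁ η)) :
    IsZero A ∨ Mono η := by
  have hA₃ : (tensorLeft A).PreservesZeroMorphisms := inferInstance
  let S : Set D := {M : D | IsZero (A ⊗ M)}
  have hS : IsLocalizingTensorIdeal S := by
    refine ⟨?_, ?_, ?_, ?_, ?_, ?_⟩
    · intro M N e hM
      exact IsZero.of_iso hM ((tensorLeft A).mapIso e.symm)
    · intro M N f hf hM
      have : Mono ((tensorLeft A).map f) := inferInstance
      exact IsZero.of_mono ((tensorLeft A).map f) hM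
    · intro M N f hf hM
      have : Epi ((tensorLeft A).map f) := inferInstance
      exact IsZero.of_epi ((tensorLeft A).map f) hM
    · intro T hT h1 h3
      have h := (hT.map_of_exact (tensorLeft A)).exact
      exact h.isZero_of_both_zeros (IsZero.eq_of_src h1 _ _) (IsZero.eq_of_tgt h3 _ _)
    · intro ι f hf
      have hc := isColimitOfPreserves (tensorLeft A) (coproductIsCoproduct f)
      rw [Set.mem_setOf_eq, IsZero.iff_id_eq_zero]
      refine hc.hom_ext fun j => ?_
      exact IsZero.eq_of_src (hf j.as) _ _
    · intro N M hM
      have e : A ⊗ (N ⊗ M) ≅ N ⊗ (A ⊗ M) :=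
        (α_ A N M).symm ≪≫ whiskerRightIso (β_ A N) M ≪≫ α_ N A M
      exact IsZero.of_iso ((tensorLeft N).map_isZero hM) e
  rcases hD S hS with h | h
  · right
    refine Preadditive.mono_of_isZero_kernel η ?_
    have hK : kernel η ∈ S := by
      have h1 : Mono ((tensorLeft A).map (kernel.ι η)) := inferInstance
      have h2 : Mono (A ◁ η) := inferInstance
      have h3 : A ◁ kernel.ι η = 0 := by
        rw [← cancel_mono (A ◁ η), ← MonoidalCategory.whiskerLeft_comp, kernel.condition]
        simp
      exact IsZero.of_mono_eq_zero ((tensorLeft A).map (kernel.ι η)) h3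
    rw [h] at hK
    exact hK
  · left
    have h1 : 𝟙_ D ∈ S := by rw [h]; trivial
    exact IsZero.of_iso h1 (ρ_ A).symm
end

section
/- Let D be an abelian category with arbitrary small coproducts carrying a closed symmetric monoidal structure whose tensor product is additive in each variable, and assume that every object of D admits an epimorphism from a coproduct of dualizable objects. Let E be an object of D such that the internal-hom functor [−, E] : Dᵒᵖ ⥤ D is exact. Then the class S = { M : [M, E] is a zero object } is a localizing tensor-ideal of D: it is closed under subobjects, quotient objects, extensions, arbitrary coproducts, and satisfies N ⊗ M ∈ S for every M ∈ S and every object N of D. -/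
open CategoryTheory CategoryTheory.Limits CategoryTheory.MonoidalCategory
open Opposite

universe v u

theorem isZero_ihom_iff_aux {D : Type u} [Category.{v} D] [Abelian D] [MonoidalCategory D]
    [MonoidalClosed D] (E M : D) :
    IsZero (((MonoidalClosed.internalHom (C := D)).obj (op M)).obj E) ↔
      ∀ (T : D) (g h : M ⊗ T ⟶ E), g = h := by
  constructor
  · intro hz T g h
    exact MonoidalClosed.curry_injective (hz.eq_of_tgt _ _)
  · intro H
    rw [IsZero.iff_id_eq_zero]
    exact MonoidalClosed.uncurry_injective (A := M) (X := E) (H _ _ _)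

/-- Suppose every object of `D` admits an epimorphism from a coproduct of dualizable
objects, and `E` is an object such that the internal-hom functor `[-, E] : Dᵒᵖ ⥤ D` is
exact.  Then the class of objects `M` with `[M, E] = 0` is a localizing tensor-ideal. -/
theorem isLocalizingTensorIdeal_ker_internalHom
    {D : Type u} [Category.{v} D] [Abelian D] [MonoidalCategory D]
    [SymmetricCategory D] [MonoidalClosed D] [MonoidalPreadditive D]
    [HasCoproducts.{v} D]
    (hgen : ∀ M : D, ∃ (ι : Type v) (f : ι → D) (p : (∐ f) ⟶ M),
      (∀ i : ι, ∃ Y : D, Nonempty (ExactPairing (f i) Y)) ∧ Epi p)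
    (E : D)
    (hE₁ : PreservesFiniteLimits ((MonoidalClosed.internalHom (C := D)).flip.obj E))
    (hE₂ : PreservesFiniteColimits ((MonoidalClosed.internalHom (C := D)).flip.obj E)) :
    IsLocalizingTensorIdeal
      {M : D | IsZero (((MonoidalClosed.internalHom (C := D)).obj (op M)).obj E)} := by
  have key := isZero_ihom_iff_aux (D := D) E
  set F := (MonoidalClosed.internalHom (C := D)).flip.obj E with hF
  have hsub : ∀ (M N : D) (f : N ⟶ M), Mono f → IsZero (F.obj (op M)) →
      IsZero (F.obj (op N)) := by
    intro M N f hf hM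
    have : Epi (F.map f.op) := inferInstance
    exact IsZero.of_epi (F.map f.op) hM
  have hquo : ∀ (M N : D) (f : M ⟶ N), Epi f → IsZero (F.obj (op M)) →
      IsZero (F.obj (op N)) := by
    intro M N f hf hM
    have : Mono (F.map f.op) := inferInstance
    exact IsZero.of_mono (F.map f.op) hM
  refine ⟨?_, hsub, hquo, ?_, ?_, ?_⟩
  · intro M N e hM
    exact hquo M N e.hom inferInstance hM
  · intro T hT h1 h3
    have : F.PreservesZeroMorphisms := inferInstance
    have h := hT.op.exact.map F
    exact h.isZero_of_both_zeros (h3.eq_of_src _ _) (h1.eq_of_tgt _ _)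
  · intro ι f hf
    refine (key _).2 fun T g h => ?_
    have inj : ∀ {X : D} (a : X ⊗ T ⟶ E), a = (β_ X T).hom ≫ (β_ X T).inv ≫ a := by
      intro X a; simp
    rw [inj g, inj h]
    congr 1
    apply MonoidalClosed.curry_injective
    apply Sigma.hom_ext
    intro i
    rw [← MonoidalClosed.curry_natural_left, ← MonoidalClosed.curry_natural_left]
    congr 1
    rw [← cancel_epi (β_ (f i) T).hom]
    exact (key _).1 (hf i) _ _ _
  · intro N M hM
    refine (key _).2 fun T g h => ?_
    rw [← cancel_epi ((α_ M N T).inv ≫ (β_ M N).hom ▷ T)]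
    exact (key _).1 hM _ _ _
end

section
/- Let C be an abelian category with a monoidal structure whose tensor product is additive in each variable. Let A be a flat object of C and η : 𝟙 ⟶ A a morphism from the tensor unit such that A ◁ η : A ⟶ A ⊗ A (the identity of A tensored with η) is a monomorphism. Then A ⊗ K is a zero object, where K is the kernel of η. -/
open CategoryTheory CategoryTheory.Limits CategoryTheory.MonoidalCategory

universe v u

/-- In an abelian monoidal category with additive tensor, if `A` is flat and
`A ◁ η : A ⟶ A ⊗ A` is a monomorphism, then `A ⊗ ker(η)` is zero. -/
theorem tensor_kernel_unit_isZero
    {C : Type u} [Category.{v} C] [Abelian C] [MonoidalCategory C]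
    [MonoidalPreadditive C]
    (A : C) (hA₁ : PreservesFiniteLimits (tensorLeft A))
    (hA₂ : PreservesFiniteColimits (tensorLeft A))
    (η : 𝟙_ C ⟶ A) (hη : Mono (A ◁ η)) :
    IsZero (A ⊗ kernel η) := by
  have h1 : Mono (A ◁ kernel.ι η) :=
    inferInstanceAs (Mono ((tensorLeft A).map (kernel.ι η)))
  have h2 : A ◁ kernel.ι η = 0 := by
    rw [← cancel_mono (A ◁ η), ← MonoidalCategory.whiskerLeft_comp, kernel.condition,
      MonoidalPreadditive.whiskerLeft_zero, zero_comp]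
  exact IsZero.of_mono_eq_zero _ h2
end
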